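/- Let (A,·,α,β) be a regular BiHom-LR algebra over a field K of characteristic zero. Define x ▷ y = −x·y and [x,y] = x·y − α⁻¹β(y)·αβ⁻¹(x) for all x,y ∈ A. Then (A,[·,·],▷,α,β) is a BiHom-post-Lie algebra. -/

import Mathlib

section Defs

variable (K : Type*) [Field K]
variable {A V : Type*} [AddCommGroup A] [Module K A] [AddCommGroup V] [Module K V]

/-- `f : A → A → V` is bilinear over `K`. -/
def IsBilin (f : A → A → V) : Prop :=
  (∀ y, IsLinearMap K fun x => f x y) ∧ (∀ x, IsLinearMap K fun y => f x y)

/-- `b` is a Lie bracket on `A`. -/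
def IsLieBracket (b : A → A → A) : Prop :=
  IsBilin K b ∧ (∀ x y, b x y = - b y x) ∧
    (∀ x y z, b x (b y z) + b y (b z x) + b z (b x y) = 0)

/-- `(A, b, t)` is a (left) post-Lie algebra. -/
def IsPostLie (b t : A → A → A) : Prop :=
  IsLieBracket K b ∧ IsBilin K t ∧
    (∀ x y z, t x (b y z) = b (t x y) z + b y (t x z)) ∧
    (∀ x y z, t (b x y) z =
      (t x (t y z) - t (t x y) z) - (t y (t x z) - t (t y x) z))

/-- `ρ` is a representation of the Lie algebra `(A, b)` on `V`. -/
def IsLieRep (b : A → A → A) (ρ : A → V → V) : Prop :=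
  (∀ x, IsLinearMap K (ρ x)) ∧ (∀ v, IsLinearMap K fun x => ρ x v) ∧
    (∀ x y v, ρ (b x y) v = ρ x (ρ y v) - ρ y (ρ x v))

/-- `(A, b, α, β)` is a BiHom-Lie algebra. -/
def IsBiHomLie (b : A → A → A) (α β : A → A) : Prop :=
  IsBilin K b ∧ IsLinearMap K α ∧ IsLinearMap K β ∧
    (∀ x, α (β x) = β (α x)) ∧
    (∀ x y, α (b x y) = b (α x) (α y)) ∧
    (∀ x y, β (b x y) = b (β x) (β y)) ∧
    (∀ x y, b (β x) (α y) = - b (β y) (α x)) ∧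
    (∀ x y z, b (β (β x)) (b (β y) (α z)) + b (β (β y)) (b (β z) (α x)) +
        b (β (β z)) (b (β x) (α y)) = 0)

/-- `(V, ρ, φ, ψ)` is a representation of the BiHom-Lie algebra `(A, b, α, β)`. -/
def IsBiHomRep (b : A → A → A) (α β : A → A) (ρ : A → V → V) (φ ψ : V → V) : Prop :=
  IsLinearMap K φ ∧ IsLinearMap K ψ ∧ (∀ v, φ (ψ v) = ψ (φ v)) ∧
    (∀ x, IsLinearMap K (ρ x)) ∧ (∀ v, IsLinearMap K fun x => ρ x v) ∧
    (∀ x v, ρ (α x) (φ v) = φ (ρ x v)) ∧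
    (∀ x v, ρ (β x) (ψ v) = ψ (ρ x v)) ∧
    (∀ x y v, ρ (b (β x) y) (ψ v) = ρ (α (β x)) (ρ y v) - ρ (β y) (ρ (α x) v))

/-- `(A, b, t, α, β)` is a (left) BiHom-post-Lie algebra. -/
def IsBiHomPostLie (b t : A → A → A) (α β : A → A) : Prop :=
  IsBiHomLie K b α β ∧ IsBilin K t ∧
    (∀ x y, α (t x y) = t (α x) (α y)) ∧
    (∀ x y, β (t x y) = t (β x) (β y)) ∧
    (∀ x y z, t (α (β x)) (b y z) = b (t (β x) y) (β z) + b (β y) (t (α x) z)) ∧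
    (∀ x y z, t (b (β x) (α y)) (β z) =
      (t (α (β x)) (t (α y) z) - t (t (β x) (α y)) (β z)) -
      (t (α (β y)) (t (α x) z) - t (t (β y) (α x)) (β z)))

/-- `(V, bv, ρ, φ, ψ)` is an `A`-module `K`-algebra over the BiHom-Lie algebra
`(A, b, α, β)`. -/
def IsModuleKAlgebra (b : A → A → A) (α β : A → A) (bv : V → V → V)
    (ρ : A → V → V) (φ ψ : V → V) : Prop :=
  IsBiHomLie K bv φ ψ ∧ IsBiHomRep K b α β ρ φ ψ ∧
    (∀ x u v, ρ (α (β x)) (bv u v) = bv (ρ (β x) u) (ψ v) + bv (ψ u) (ρ (α x) v))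

end Defs

/-- `(A, m, α, β)` is a BiHom-LR algebra. -/
def IsBiHomLR {K A : Type*} [Field K] [AddCommGroup A] [Module K A]
    (m : A → A → A) (α β : A → A) : Prop :=
  IsBilin K m ∧ IsLinearMap K α ∧ IsLinearMap K β ∧
    (∀ x, α (β x) = β (α x)) ∧
    (∀ x y, α (m x y) = m (α x) (α y)) ∧
    (∀ x y, β (m x y) = m (β x) (β y)) ∧
    (∀ x y z, m (m x y) (α z) = m (m x z) (α y)) ∧
    (∀ x y z, m (β x) (m y z) = m (β y) (m x z))

/-!
An LR-algebra is a bilinear product whose left multiplications commute with one another, and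
likewise its right multiplications; with its commutator and the negated product it is a post-Lie
algebra. Twisting the arguments of both operations of a post-Lie algebra by commuting endomorphisms
`α` and `β` (the Yau twist, here `Function.bicompl · α β`) gives a BiHom-post-Lie algebra. Finally,
every regular BiHom-LR algebra is the Yau twist of the LR-algebra `(x, y) ↦ α⁻¹ x · β⁻¹ y`, and the
bracket of the theorem is the Yau twist of the commutator of that LR-algebra.
-/

open Function

section Semiconj

variable {A B : Type*}

theorem semiconj₂_bicompl {f : A → B} {m : A → A → A} {n : B → B → B} {φ ψ : A → A}
    {φ' ψ' : B → B} (h : Semiconj₂ f m n) (hφ : Semiconj f φ φ') (hψ : Semiconj f ψ ψ') :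
    Semiconj₂ f (bicompl m φ ψ) (bicompl n φ' ψ') := fun x y => by
  simp only [bicompl, h.eq, hφ.eq, hψ.eq]

theorem semiconj₂_inverse {f : A → B} {g : B → A} {m : A → A → A} {n : B → B → B}
    (h : Semiconj₂ f m n) (hl : LeftInverse g f) (hr : RightInverse g f) :
    Semiconj₂ g n m := fun x y => by
  rw [← hl (m (g x) (g y)), h.eq, hr, hr]

theorem commute_inverse {f f' g : A → A} (h : Function.Commute f g) (hl : LeftInverse f' f)
    (hr : RightInverse f' f) : Function.Commute f' g :=
  (h.symm.semiconj.inverses_right hr hl).commute.symm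

/-- The commutator of the product `m`, the Lie bracket of an LR-algebra. -/
def commutatorBracket [Sub A] (m : A → A → A) (x y : A) : A := m x y - m y x

theorem semiconj₂_commutatorBracket [Sub A] [Sub B] {f : A → B} {m : A → A → A}
    {n : B → B → B} (h : Semiconj₂ f m n) (hf : ∀ x y, f (x - y) = f x - f y) :
    Semiconj₂ f (commutatorBracket m) (commutatorBracket n) := fun x y => by
  simp only [commutatorBracket, hf, h.eq]

end Semiconj

theorem isLinearMap_inverse {R M N : Type*} [Semiring R] [AddCommMonoid M] [AddCommMonoid N]
    [Module R M] [Module R N] {f : M → N} {g : N → M} (hf : IsLinearMap R f)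
    (hl : LeftInverse g f) (hr : RightInverse g f) : IsLinearMap R g :=
  ((hf.mk' f).inverse g hl hr).isLinear

section Algebra

variable {K A : Type*} [Field K] [AddCommGroup A] [Module K A]

namespace IsBilin

variable {V : Type*} [AddCommGroup V] [Module K V] {f g : A → A → V}

theorem map_sub_left (hf : IsBilin K f) (x y z : A) : f (x - y) z = f x z - f y z :=
  (hf.1 z).map_sub x y

theorem map_sub_right (hf : IsBilin K f) (x y z : A) : f x (y - z) = f x y - f x z :=
  (hf.2 x).map_sub y z

theorem map_neg_left (hf : IsBilin K f) (x y : A) : f (-x) y = -f x y :=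
  (hf.1 y).map_neg x

theorem map_neg_right (hf : IsBilin K f) (x y : A) : f x (-y) = -f x y :=
  (hf.2 x).map_neg y

theorem swap (hf : IsBilin K f) : IsBilin K fun x y => f y x :=
  ⟨hf.2, hf.1⟩

theorem neg (hf : IsBilin K f) : IsBilin K fun x y => -f x y :=
  ⟨fun y => (-(hf.1 y).mk' _).isLinear, fun x => (-(hf.2 x).mk' _).isLinear⟩

theorem sub (hf : IsBilin K f) (hg : IsBilin K g) : IsBilin K fun x y => f x y - g x y :=
  ⟨fun y => ((hf.1 y).mk' _ - (hg.1 y).mk' _).isLinear,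
    fun x => ((hf.2 x).mk' _ - (hg.2 x).mk' _).isLinear⟩

theorem bicompl {φ ψ : A → A} (hf : IsBilin K f) (hφ : IsLinearMap K φ)
    (hψ : IsLinearMap K ψ) : IsBilin K (Function.bicompl f φ ψ) :=
  ⟨fun y => (((hf.1 (ψ y)).mk' _).comp (hφ.mk' _)).isLinear,
    fun x => (((hf.2 (φ x)).mk' _).comp (hψ.mk' _)).isLinear⟩

theorem commutatorBracket {m : A → A → A} (hm : IsBilin K m) :
    IsBilin K (commutatorBracket m) :=
  hm.sub hm.swap

end IsBilin

section YauTwist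

variable {b t : A → A → A} {α β : A → A}

theorem IsLieBracket.isBiHomLie_bicompl (hb : IsLieBracket K b) (hα : IsLinearMap K α)
    (hβ : IsLinearMap K β) (hαβ : Function.Commute α β) (hαb : Semiconj₂ α b b)
    (hβb : Semiconj₂ β b b) : IsBiHomLie K (bicompl b α β) α β := by
  obtain ⟨bilin, skew, jacobi⟩ := hb
  refine ⟨bilin.bicompl hα hβ, hα, hβ, hαβ,
    semiconj₂_bicompl hαb (Function.Commute.refl α) hαβ,
    semiconj₂_bicompl hβb hαβ.symm (Function.Commute.refl β), ?_, ?_⟩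
  · intro x y
    simp only [bicompl, hαβ.eq]
    exact skew _ _
  · intro x y z
    simp only [bicompl, hβb.eq, hαβ.eq]
    exact jacobi _ _ _

theorem IsPostLie.isBiHomPostLie_bicompl (h : IsPostLie K b t) (hα : IsLinearMap K α)
    (hβ : IsLinearMap K β) (hαβ : Function.Commute α β) (hαb : Semiconj₂ α b b)
    (hβb : Semiconj₂ β b b) (hαt : Semiconj₂ α t t) (hβt : Semiconj₂ β t t) :
    IsBiHomPostLie K (bicompl b α β) (bicompl t α β) α β := by
  obtain ⟨lie, bilin, derivation, associator⟩ := h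
  refine ⟨lie.isBiHomLie_bicompl hα hβ hαβ hαb hβb, bilin.bicompl hα hβ,
    semiconj₂_bicompl hαt (Function.Commute.refl α) hαβ,
    semiconj₂_bicompl hβt hαβ.symm (Function.Commute.refl β), ?_, ?_⟩
  · intro x y z
    simp only [bicompl, hβb.eq, hαt.eq, hβt.eq, hαβ.eq]
    exact derivation _ _ _
  · intro x y z
    simp only [bicompl, hαb.eq, hαt.eq, hβt.eq, hαβ.eq]
    exact associator _ _ _

end YauTwist

variable (K) in
/-- `(A, m)` is an LR-algebra: the case `α = β = id` of `IsBiHomLR`, to which the regular case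
reduces by untwisting. -/
structure IsLR (m : A → A → A) : Prop where
  isBilin : IsBilin K m
  right_comm : ∀ x y z, m (m x y) z = m (m x z) y
  left_comm : ∀ x y z, m x (m y z) = m y (m x z)

namespace IsLR

variable {m : A → A → A}

theorem isLieBracket (h : IsLR K m) : IsLieBracket K (commutatorBracket m) := by
  refine ⟨h.isBilin.commutatorBracket, fun x y => (neg_sub _ _).symm, fun x y z => ?_⟩
  simp only [commutatorBracket, h.isBilin.map_sub_left, h.isBilin.map_sub_right]
  rw [h.left_comm x y z, h.left_comm x z y, h.left_comm y z x,
    h.right_comm y z x, h.right_comm z y x, h.right_comm x z y]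
  abel

theorem isPostLie (h : IsLR K m) :
    IsPostLie K (commutatorBracket m) fun x y => -m x y := by
  refine ⟨h.isLieBracket, h.isBilin.neg, fun x y z => ?_, fun x y z => ?_⟩
  · simp only [commutatorBracket, h.isBilin.map_sub_right, h.isBilin.map_neg_left,
      h.isBilin.map_neg_right]
    rw [h.right_comm x y z, h.left_comm x y z, h.left_comm x z y]
    abel
  · simp only [commutatorBracket, h.isBilin.map_sub_left, h.isBilin.map_neg_left,
      h.isBilin.map_neg_right]
    rw [h.left_comm x y z]
    abel

theorem isBiHomPostLie_bicompl {α β : A → A} (h : IsLR K m) (hα : IsLinearMap K α)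
    (hβ : IsLinearMap K β) (hαβ : Function.Commute α β) (hαm : Semiconj₂ α m m)
    (hβm : Semiconj₂ β m m) :
    IsBiHomPostLie K (bicompl (commutatorBracket m) α β)
      (bicompl (fun x y => -m x y) α β) α β :=
  h.isPostLie.isBiHomPostLie_bicompl hα hβ hαβ
    (semiconj₂_commutatorBracket hαm hα.map_sub) (semiconj₂_commutatorBracket hβm hβ.map_sub)
    (fun x y => by rw [hα.map_neg, hαm.eq]) (fun x y => by rw [hβ.map_neg, hβm.eq])

end IsLR

theorem IsBiHomLR.isLR_bicompl_inverse {m : A → A → A} {α β α' β' : A → A}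
    (h : IsBiHomLR (K := K) m α β) (hα : LeftInverse α' α) (hα' : RightInverse α' α)
    (hβ : LeftInverse β' β) (hβ' : RightInverse β' β) : IsLR K (bicompl m α' β') := by
  obtain ⟨bilin, linα, linβ, hαβ, hαm, hβm, right_comm, left_comm⟩ := h
  have hα'm : Semiconj₂ α' m m := semiconj₂_inverse hαm hα hα'
  have hβ'm : Semiconj₂ β' m m := semiconj₂_inverse hβm hβ hβ'
  have hα'β : Function.Commute α' β := commute_inverse hαβ hα hα'
  have hα'β' : Function.Commute α' β' := (commute_inverse hα'β.symm hβ hβ').symm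
  refine ⟨bilin.bicompl (isLinearMap_inverse linα hα hα') (isLinearMap_inverse linβ hβ hβ'),
    fun x y z => ?_, fun x y z => ?_⟩
  · simpa only [bicompl, hα'm.eq, hα' _] using
      right_comm (α' (α' x)) (α' (β' y)) (α' (β' z))
  · simpa only [bicompl, hβ'm.eq, hα'β'.eq, hβ' _] using
      left_comm (β' (α' x)) (β' (α' y)) (β' (β' z))

end Algebra

theorem biHomPostLie_of_biHomLR_general {K A : Type*} [Field K] [AddCommGroup A]
    [Module K A] (m : A → A → A) (α β α' β' : A → A) (h : IsBiHomLR (K := K) m α β)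
    (hαα' : ∀ x, α (α' x) = x) (hα'α : ∀ x, α' (α x) = x)
    (hββ' : ∀ x, β (β' x) = x) (hβ'β : ∀ x, β' (β x) = x) :
    IsBiHomPostLie K (fun x y => m x y - m (α' (β y)) (α (β' x)))
      (fun x y => - m x y) α β := by
  have hLR : IsLR K (bicompl m α' β') :=
    h.isLR_bicompl_inverse hα'α hαα' hβ'β hββ'
  obtain ⟨-, linα, linβ, hαβ, hαm, hβm, -⟩ := h
  have hα'β : Function.Commute α' β := commute_inverse hαβ hα'α hαα'
  have hβ'α : Function.Commute β' α := commute_inverse (Function.Commute.symm hαβ) hβ'β hββ'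
  have hαα'_comm : Function.Commute α α' := fun x => by rw [hαα', hα'α]
  have hββ'_comm : Function.Commute β β' := fun x => by rw [hββ', hβ'β]
  have bracket_eq : (fun x y => m x y - m (α' (β y)) (α (β' x))) =
      bicompl (commutatorBracket (bicompl m α' β')) α β := by
    funext x y
    simp only [bicompl, commutatorBracket, hα'α, hβ'β, hβ'α.eq]
  have product_eq : (fun x y => -m x y) =
      bicompl (fun x y => -bicompl m α' β' x y) α β := by
    funext x y
    simp only [bicompl, hα'α, hβ'β]
  rw [bracket_eq, product_eq]
  exact hLR.isBiHomPostLie_bicompl linα linβ hαβ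
    (semiconj₂_bicompl hαm hαα'_comm hβ'α.symm) (semiconj₂_bicompl hβm hα'β.symm hββ'_comm)

/-- a regular BiHom-LR algebra gives a BiHom-post-Lie algebra. -/
theorem biHomPostLie_of_biHomLR {K A : Type*} [Field K] [CharZero K]
    [AddCommGroup A] [Module K A] (m : A → A → A) (α β α' β' : A → A)
    (h : IsBiHomLR (K := K) m α β)
    (hαα' : ∀ x, α (α' x) = x) (hα'α : ∀ x, α' (α x) = x)
    (hββ' : ∀ x, β (β' x) = x) (hβ'β : ∀ x, β' (β x) = x) :
    IsBiHomPostLie K (fun x y => m x y - m (α' (β y)) (α (β' x)))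
      (fun x y => - m x y) α β :=
  biHomPostLie_of_biHomLR_general m α β α' β' h hαα' hα'α hββ' hβ'β
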